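/- arXiv:1411.5033 — 2 statements merged into one kernel-verified Lean document; each statement's English description precedes it below -/
import Mathlib

section
/- There exists a constant M > 0, depending only on A and C₀, such that for every t ≥ 0 one has β² ∫₀ᵗ ‖∂ₓ²u(s,·)‖²_{L²(ℝ)} ds ≤ M ε⁵. -/
open MeasureTheory

namespace KS

/-- Smooth functions of `(t,x)` vanishing for `|x| > R`. -/
def Sm (R : ℝ) (g : ℝ → ℝ → ℝ) : Prop :=
  ContDiff ℝ (⊤ : ℕ∞) (Function.uncurry g) ∧ ∀ t x : ℝ, R < |x| → g t x = 0

/-- The partial derivative in `x`. -/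
noncomputable def Dx (g : ℝ → ℝ → ℝ) : ℝ → ℝ → ℝ := fun t x => deriv (g t) x

/-- The partial derivative in `t`. -/
noncomputable def Dt (g : ℝ → ℝ → ℝ) : ℝ → ℝ → ℝ := fun t x => deriv (fun τ => g τ x) t

variable {R : ℝ} {g : ℝ → ℝ → ℝ}

lemma hasDx' (h : ContDiff ℝ (⊤ : ℕ∞) (Function.uncurry g)) (t x : ℝ) :
    HasDerivAt (g t) (fderiv ℝ (Function.uncurry g) (t, x) (0, 1)) x := by
  have h1 : HasFDerivAt (Function.uncurry g) (fderiv ℝ (Function.uncurry g) (t, x)) (t, x) :=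
    (h.differentiable (by simp) _).hasFDerivAt
  have h2 : HasDerivAt (fun y : ℝ => (t, y)) ((0 : ℝ), (1 : ℝ)) x :=
    (hasDerivAt_const x t).prodMk (hasDerivAt_id x)
  exact h1.comp_hasDerivAt x h2

lemma hasDt' (h : ContDiff ℝ (⊤ : ℕ∞) (Function.uncurry g)) (t x : ℝ) :
    HasDerivAt (fun τ => g τ x) (fderiv ℝ (Function.uncurry g) (t, x) (1, 0)) t := by
  have h1 : HasFDerivAt (Function.uncurry g) (fderiv ℝ (Function.uncurry g) (t, x)) (t, x) :=
    (h.differentiable (by simp) _).hasFDerivAt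
  have h2 : HasDerivAt (fun y : ℝ => (y, x)) ((1 : ℝ), (0 : ℝ)) t :=
    (hasDerivAt_id t).prodMk (hasDerivAt_const t x)
  exact h1.comp_hasDerivAt t h2

lemma Dx_eq (h : ContDiff ℝ (⊤ : ℕ∞) (Function.uncurry g)) :
    Function.uncurry (Dx g) = fun p => fderiv ℝ (Function.uncurry g) p (0, 1) := by
  ext ⟨t, x⟩
  exact (hasDx' h t x).deriv

lemma Dt_eq (h : ContDiff ℝ (⊤ : ℕ∞) (Function.uncurry g)) :
    Function.uncurry (Dt g) = fun p => fderiv ℝ (Function.uncurry g) p (1, 0) := by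
  ext ⟨t, x⟩
  exact (hasDt' h t x).deriv

lemma Sm.hasDx (h : Sm R g) (t x : ℝ) : HasDerivAt (g t) (Dx g t x) x :=
  (hasDx' h.1 t x).differentiableAt.hasDerivAt

lemma Sm.hasDt (h : Sm R g) (t x : ℝ) : HasDerivAt (fun τ => g τ x) (Dt g t x) t :=
  (hasDt' h.1 t x).differentiableAt.hasDerivAt

lemma Sm.dx (h : Sm R g) : Sm R (Dx g) := by
  constructor
  · rw [Dx_eq h.1]
    exact (h.1.fderiv_right (m := ((⊤ : ℕ∞) : WithTop ℕ∞)) (by simp)).clm_apply contDiff_const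
  · intro t x hx
    have ho : IsOpen {y : ℝ | R < |y|} := isOpen_lt continuous_const continuous_abs
    have : g t =ᶠ[nhds x] fun _ => 0 := by
      filter_upwards [ho.mem_nhds hx] with y hy
      exact h.2 t y hy
    unfold Dx
    rw [this.deriv_eq]; simp

lemma Sm.dt (h : Sm R g) : Sm R (Dt g) := by
  constructor
  · rw [Dt_eq h.1]
    exact (h.1.fderiv_right (m := ((⊤ : ℕ∞) : WithTop ℕ∞)) (by simp)).clm_apply contDiff_const
  · intro t x hx
    have : (fun τ => g τ x) = fun _ => 0 := by
      ext τ; exact h.2 τ x hx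
    unfold Dt
    rw [this]; simp

lemma Sm.comm (h : Sm R g) (t x : ℝ) : Dt (Dx g) t x = Dx (Dt g) t x := by
  have h1 := congrFun (Dt_eq h.dx.1) (t, x)
  have h2 := congrFun (Dx_eq h.dt.1) (t, x)
  simp only [Function.uncurry_apply_pair] at h1 h2
  rw [h1, h2, Dx_eq h.1, Dt_eq h.1]
  have hd : DifferentiableAt ℝ (fderiv ℝ (Function.uncurry g)) (t, x) :=
    ((h.1.fderiv_right (m := ((⊤ : ℕ∞) : WithTop ℕ∞)) (by simp)).differentiable (by simp)) _
  have hs : IsSymmSndFDerivAt ℝ (Function.uncurry g) (t, x) :=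
    h.1.contDiffAt.isSymmSndFDerivAt (by
      rw [minSmoothness_of_isRCLikeNormedField]; exact WithTop.coe_le_coe.2 (le_top : (2 : ℕ∞) ≤ ⊤))
  rw [fderiv_clm_apply hd (differentiableAt_const _), fderiv_clm_apply hd (differentiableAt_const _)]
  simp
  exact hs _ _

lemma Sm.cont (h : Sm R g) (t : ℝ) : Continuous (g t) :=
  h.1.continuous.comp (by fun_prop : Continuous fun x : ℝ => (t, x))

lemma cs {f : ℝ → ℝ} (hz : ∀ x, R < |x| → f x = 0) : HasCompactSupport f := by
  refine HasCompactSupport.intro (K := Set.Icc (-R) R) isCompact_Icc ?_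
  intro x hx
  apply hz
  by_contra hc
  exact hx (abs_le.1 (not_lt.1 hc))

lemma integ {f : ℝ → ℝ} (hf : Continuous f) (hz : ∀ x, R < |x| → f x = 0) : Integrable f :=
  hf.integrable_of_hasCompactSupport (cs hz)

lemma Sm.integ (h : Sm R g) (t : ℝ) : Integrable (g t) := KS.integ (h.cont t) (h.2 t)

lemma Sm.hasDerivAt_integral (h : Sm R g) (t : ℝ) :
    HasDerivAt (fun τ => ∫ x, g τ x) (∫ x, Dt g t x) t := by
  obtain ⟨K, hK⟩ := ((isCompact_Icc (a := t - 1) (b := t + 1)).prod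
    (isCompact_Icc (a := -R) (b := R))).exists_bound_of_continuousOn h.dt.1.continuous.continuousOn
  refine (hasDerivAt_integral_of_dominated_loc_of_deriv_le (F := g) (F' := Dt g) (x₀ := t)
    (s := Set.Icc (t - 1) (t + 1)) (bound := (Set.Icc (-R) R).indicator fun _ => K)
    (Icc_mem_nhds (by linarith) (by linarith)) ?_ (h.integ t) ?_ ?_ ?_ ?_).2
  · exact Filter.Eventually.of_forall fun τ => (h.cont τ).aestronglyMeasurable
  · exact (h.dt.cont t).aestronglyMeasurable
  · refine Filter.Eventually.of_forall fun x τ hτ => ?_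
    by_cases hx : x ∈ Set.Icc (-R) R
    · rw [Set.indicator_of_mem hx]
      exact hK (τ, x) ⟨hτ, hx⟩
    · rw [Set.indicator_of_notMem hx, h.dt.2 τ x]
      · simp
      · by_contra hc
        exact hx (abs_le.1 (not_lt.1 hc))
  · rw [integrable_indicator_iff measurableSet_Icc]
    exact integrableOn_const (by simp)
  · exact Filter.Eventually.of_forall fun x τ _ => h.hasDt τ x

/-- The fourth power of the sup norm is at most the product of the squared L2 norms. -/
lemma sup_bound {f f' : ℝ → ℝ} (hd : ∀ x, HasDerivAt f (f' x) x) (hc : Continuous f')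
    (hz : ∀ x, R < |x| → f x = 0) (hz' : ∀ x, R < |x| → f' x = 0) (x : ℝ) :
    (f x) ^ 4 ≤ (∫ y, f y ^ 2) * (∫ y, f' y ^ 2) := by
  have hfc : Continuous f := continuous_iff_continuousAt.2 fun y => (hd y).continuousAt
  have hi1 : Integrable fun y => f y ^ 2 := integ (R := R) (by fun_prop) (fun y hy => by simp [hz y hy])
  have hi2 : Integrable fun y => f' y ^ 2 := integ (R := R) (by fun_prop) (fun y hy => by simp [hz' y hy])
  have hi3 : Integrable fun y => 2 * f y * f' y :=
    integ (R := R) (by fun_prop) (fun y hy => by simp [hz' y hy])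
  have hdd : ∀ y, HasDerivAt (fun y => f y ^ 2) (2 * f y * f' y) y := fun y => by
    have := (hd y).fun_pow 2
    simpa using this
  have hder : deriv (fun y => f y ^ 2) = fun y => 2 * f y * f' y := funext fun y => (hdd y).deriv
  have hC1 : ContDiff ℝ 1 (fun y => f y ^ 2) := by
    rw [contDiff_one_iff_deriv]
    refine ⟨fun y => (hdd y).differentiableAt, ?_⟩
    rw [hder]; fun_prop
  have hcs : HasCompactSupport (fun y => f y ^ 2) := cs (R := R) (fun y hy => by simp [hz y hy])
  have e1 := HasCompactSupport.integral_Iic_deriv_eq hC1 hcs x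
  have e2 := HasCompactSupport.integral_Ioi_deriv_eq hC1 hcs x
  rw [hder] at e1 e2
  have hF : 0 ≤ ∫ y, f y ^ 2 := integral_nonneg fun y => sq_nonneg _
  have hG : 0 ≤ ∫ y, f' y ^ 2 := integral_nonneg fun y => sq_nonneg _
  have key : ∀ k : ℝ, 0 ≤ k → 2 * (f x ^ 2) * k ≤ (∫ y, f y ^ 2) * (k * k) + ∫ y, f' y ^ 2 := by
    intro k hk
    have hi4 : Integrable fun y => k ^ 2 * f y ^ 2 + f' y ^ 2 := (hi1.const_mul _).add hi2
    have a1 : ∫ y in Set.Iic x, k * (2 * f y * f' y) ≤ ∫ y in Set.Iic x, (k ^ 2 * f y ^ 2 + f' y ^ 2) :=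
      integral_mono (hi3.const_mul k).integrableOn hi4.integrableOn fun y => by
        show k * (2 * f y * f' y) ≤ k ^ 2 * f y ^ 2 + f' y ^ 2
        nlinarith [sq_nonneg (k * f y - f' y)]
    have a2 : ∫ y in Set.Ioi x, -k * (2 * f y * f' y) ≤ ∫ y in Set.Ioi x, (k ^ 2 * f y ^ 2 + f' y ^ 2) :=
      integral_mono (hi3.const_mul (-k)).integrableOn hi4.integrableOn fun y => by
        show -k * (2 * f y * f' y) ≤ k ^ 2 * f y ^ 2 + f' y ^ 2
        nlinarith [sq_nonneg (k * f y + f' y)]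
    rw [integral_const_mul] at a1 a2
    rw [e1] at a1
    rw [e2] at a2
    have a3 := integral_add_compl (measurableSet_Iic (a := x)) hi4
    rw [Set.compl_Iic, integral_add (hi1.const_mul _) hi2, integral_const_mul] at a3
    nlinarith
  have := discrim_le_zero (a := ∫ y, f y ^ 2) (b := -(2 * f x ^ 2)) (c := ∫ y, f' y ^ 2) (by
    intro k
    rcases le_total 0 k with hk | hk
    · linarith [key k hk]
    · have : 0 ≤ (f x ^ 2) * (-k) := mul_nonneg (sq_nonneg _) (by linarith)
      have : 0 ≤ (∫ y, f y ^ 2) * (k * k) := mul_nonneg hF (mul_self_nonneg k)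
      nlinarith)
  unfold discrim at this
  nlinarith

end KS

namespace KS

lemma pw {A ε β m p q r : ℝ} (hε : 0 < ε) (hm : p ^ 2 ≤ m) :
    A ^ 2 * (12 * β * (p ^ 2 * q * r) - 28 * A / 3 * β * (p ^ 3 * q * r)
      - 12 * ε * (p ^ 2 * q ^ 2)) + ε ^ 2 * (2 * A * (p * q * r) - 2 * ε * r ^ 2)
    ≤ (9 * A ^ 2 * (β ^ 2 * m / ε) + 49 / 9 * A ^ 4 * (β ^ 2 * m ^ 2 / ε) - ε ^ 3) * r ^ 2 := by
  have t1 : 12 * β * (p ^ 2 * q * r) ≤ 4 * ε * (p ^ 2 * q ^ 2) + 9 * (β ^ 2 / ε) * r ^ 2 * p ^ 2 := by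
    have : 0 ≤ (2 * ε * p * q - 3 * β * p * r) ^ 2 / ε := by positivity
    have e : (2 * ε * p * q - 3 * β * p * r) ^ 2 / ε = 4 * ε * (p ^ 2 * q ^ 2)
      + 9 * (β ^ 2 / ε) * r ^ 2 * p ^ 2 - 12 * β * (p ^ 2 * q * r) := by
      field_simp
      ring
    linarith
  have t2 : - (28 * A / 3 * β * (p ^ 3 * q * r)) ≤ 4 * ε * (p ^ 2 * q ^ 2)
      + 49 / 9 * A ^ 2 * (β ^ 2 / ε) * r ^ 2 * p ^ 4 := by
    have : 0 ≤ (2 * ε * p * q + 7 / 3 * A * β * p ^ 2 * r) ^ 2 / ε := by positivity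
    have e : (2 * ε * p * q + 7 / 3 * A * β * p ^ 2 * r) ^ 2 / ε = 4 * ε * (p ^ 2 * q ^ 2)
      + 49 / 9 * A ^ 2 * (β ^ 2 / ε) * r ^ 2 * p ^ 4 + 28 * A / 3 * β * (p ^ 3 * q * r) := by
      field_simp
      ring
    linarith
  have t3 : ε ^ 2 * (2 * A * (p * q * r)) ≤ ε ^ 3 * r ^ 2 + A ^ 2 * ε * (p ^ 2 * q ^ 2) := by
    have : 0 ≤ ε * (ε * r - A * p * q) ^ 2 := by positivity
    nlinarith
  have hp4 : p ^ 4 ≤ m ^ 2 := by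
    have := pow_le_pow_left₀ (sq_nonneg p) hm 2
    calc p ^ 4 = (p ^ 2) ^ 2 := by ring
      _ ≤ _ := this
  have t4 : 9 * (β ^ 2 / ε) * r ^ 2 * p ^ 2 ≤ 9 * (β ^ 2 / ε) * r ^ 2 * m :=
    mul_le_mul_of_nonneg_left hm (by positivity)
  have t5 : 49 / 9 * A ^ 2 * (β ^ 2 / ε) * r ^ 2 * p ^ 4
      ≤ 49 / 9 * A ^ 2 * (β ^ 2 / ε) * r ^ 2 * m ^ 2 :=
    mul_le_mul_of_nonneg_left hp4 (by positivity)
  have t6 : 0 ≤ A ^ 2 * ε * (p ^ 2 * q ^ 2) := by positivity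
  have t7 : A ^ 2 * (12 * β * (p ^ 2 * q * r) - 28 * A / 3 * β * (p ^ 3 * q * r)
      - 12 * ε * (p ^ 2 * q ^ 2)) ≤ A ^ 2 * (9 * (β ^ 2 / ε) * r ^ 2 * m
      + 49 / 9 * A ^ 2 * (β ^ 2 / ε) * r ^ 2 * m ^ 2 - 4 * ε * (p ^ 2 * q ^ 2)) :=
    mul_le_mul_of_nonneg_left (by linarith) (sq_nonneg A)
  have e : (9 * A ^ 2 * (β ^ 2 * m / ε) + 49 / 9 * A ^ 4 * (β ^ 2 * m ^ 2 / ε) - ε ^ 3) * r ^ 2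
    = A ^ 2 * (9 * (β ^ 2 / ε) * r ^ 2 * m
      + 49 / 9 * A ^ 2 * (β ^ 2 / ε) * r ^ 2 * m ^ 2) - ε ^ 3 * r ^ 2 := by ring
  rw [e]
  linarith

lemma slice {R A ε β m : ℝ} {a b c d e f : ℝ → ℝ} (hε : 0 < ε)
    (hab : ∀ x, HasDerivAt a (b x) x) (hbc : ∀ x, HasDerivAt b (c x) x)
    (hcd : ∀ x, HasDerivAt c (d x) x) (hef : ∀ x, HasDerivAt e (f x) x)
    (hf : Continuous f)
    (za : ∀ x, R < |x| → a x = 0) (zb : ∀ x, R < |x| → b x = 0) (zc : ∀ x, R < |x| → c x = 0)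
    (pde : ∀ x, e x + A * a x * b x + β * d x - (2 * A / 3) * β * (b x * c x + a x * d x)
      - (-(A / 3)) * β * b x * c x - ε * c x = 0)
    (hm : ∀ x, a x ^ 2 ≤ m) :
    ((∫ x, 2 * a x * e x) + β * (∫ x, 2 * b x * f x)
      = - 2 * ε * (∫ x, b x ^ 2) - 2 * ε * β * (∫ x, c x ^ 2)) ∧
    (A ^ 2 * (∫ x, 4 * a x ^ 3 * e x) + ε ^ 2 * (∫ x, 2 * b x * f x)
      ≤ (9 * A ^ 2 * (β ^ 2 * m / ε) + 49 / 9 * A ^ 4 * (β ^ 2 * m ^ 2 / ε) - ε ^ 3)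
        * (∫ x, c x ^ 2)) := by
  have ca : Continuous a := continuous_iff_continuousAt.2 fun y => (hab y).continuousAt
  have cb : Continuous b := continuous_iff_continuousAt.2 fun y => (hbc y).continuousAt
  have cc : Continuous c := continuous_iff_continuousAt.2 fun y => (hcd y).continuousAt
  have ce : Continuous e := continuous_iff_continuousAt.2 fun y => (hef y).continuousAt
  have i1 : Integrable fun x => 2 * a x * e x :=
    integ (R := R) (by fun_prop) (fun y hy => by simp [za y hy])
  have i2 : Integrable fun x => 2 * b x * f x :=
    integ (R := R) (by fun_prop) (fun y hy => by simp [zb y hy])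
  have i3 : Integrable fun x => 4 * a x ^ 3 * e x :=
    integ (R := R) (by fun_prop) (fun y hy => by simp [za y hy])
  have i4 : Integrable fun x => b x ^ 2 :=
    integ (R := R) (by fun_prop) (fun y hy => by simp [zb y hy])
  have i5 : Integrable fun x => c x ^ 2 :=
    integ (R := R) (by fun_prop) (fun y hy => by simp [zc y hy])
  have pe : ∀ x, e x = - A * a x * b x - β * d x + (2 * A / 3) * β * (b x * c x + a x * d x)
      + (-(A / 3)) * β * b x * c x + ε * c x := fun x => by linarith [pde x]
  constructor
  · -- energy identity
    have hQ : ∀ x, HasDerivAt (fun x => -(2 * A / 3) * a x ^ 3 - 2 * β * (a x * c x) + β * b x ^ 2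
        + 2 * β * (2 * A / 3) * (a x ^ 2 * c x) + 2 * ε * (a x * b x) + β ^ 2 * c x ^ 2
        - β ^ 2 * (2 * A / 3) * (a x * c x ^ 2) + 2 * β * (b x * e x))
        (2 * a x * e x + β * (2 * b x * f x) + 2 * ε * b x ^ 2 + 2 * ε * β * c x ^ 2) x := by
      intro x
      have := ((((((((hab x).fun_pow 3).const_mul (-(2 * A / 3))).sub
        (((hab x).mul (hcd x)).const_mul (2 * β))).add (((hbc x).fun_pow 2).const_mul β)).add
        ((((hab x).fun_pow 2).mul (hcd x)).const_mul (2 * β * (2 * A / 3)))).add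
        (((hab x).mul (hbc x)).const_mul (2 * ε))).add (((hcd x).fun_pow 2).const_mul (β ^ 2))).sub
        (((hab x).mul ((hcd x).fun_pow 2)).const_mul (β ^ 2 * (2 * A / 3))) |>.add
        (((hbc x).mul (hef x)).const_mul (2 * β))
      refine this.congr_deriv ?_
      rw [pe x]
      push_cast
      ring
    have h0 := integral_eq_zero_of_hasDerivAt_of_integrable hQ
      (integ (R := R) (by fun_prop)
        (fun y hy => by simp [za y hy, zb y hy, zc y hy]))
      (integ (R := R) (by fun_prop)
        (fun y hy => by simp [za y hy, zb y hy, zc y hy]))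
    have j1 : Integrable fun x => 2 * a x * e x + β * (2 * b x * f x) := i1.add (i2.const_mul β)
    have j2 : Integrable fun x => 2 * a x * e x + β * (2 * b x * f x) + 2 * ε * b x ^ 2 :=
      j1.add (i4.const_mul _)
    rw [integral_add j2 (i5.const_mul _), integral_add j1 (i4.const_mul _),
      integral_add i1 (i2.const_mul β), integral_const_mul, integral_const_mul,
      integral_const_mul] at h0
    linarith
  · set K : ℝ := 9 * A ^ 2 * (β ^ 2 * m / ε) + 49 / 9 * A ^ 4 * (β ^ 2 * m ^ 2 / ε) - ε ^ 3 with hK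
    have hQ : ∀ x, HasDerivAt (fun x => A ^ 2 * (-(4 * A / 5) * a x ^ 5 - 4 * β * (a x ^ 3 * c x)
        + 4 * β * (2 * A / 3) * (a x ^ 4 * c x) + 4 * ε * (a x ^ 3 * b x))
        + ε ^ 2 * (2 * (b x * e x) + β * c x ^ 2 - β * (2 * A / 3) * (a x * c x ^ 2)))
        (A ^ 2 * (4 * a x ^ 3 * e x) + ε ^ 2 * (2 * b x * f x)
          - (A ^ 2 * (12 * β * (a x ^ 2 * b x * c x) - 28 * A / 3 * β * (a x ^ 3 * b x * c x)
            - 12 * ε * (a x ^ 2 * b x ^ 2)) + ε ^ 2 * (2 * A * (a x * b x * c x) - 2 * ε * c x ^ 2)))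
        x := by
      intro x
      have := ((((((hab x).fun_pow 5).const_mul (-(4 * A / 5))).sub
        ((((hab x).fun_pow 3).mul (hcd x)).const_mul (4 * β))).add
        ((((hab x).fun_pow 4).mul (hcd x)).const_mul (4 * β * (2 * A / 3)))).add
        ((((hab x).fun_pow 3).mul (hbc x)).const_mul (4 * ε))).const_mul (A ^ 2) |>.add
        (((((hbc x).mul (hef x)).const_mul 2).add (((hcd x).fun_pow 2).const_mul β)).sub
        (((hab x).mul ((hcd x).fun_pow 2)).const_mul (β * (2 * A / 3))) |>.const_mul (ε ^ 2))
      refine this.congr_deriv ?_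
      rw [pe x]
      push_cast
      ring
    have iQ : Integrable fun x => (A ^ 2 * (4 * a x ^ 3 * e x) + ε ^ 2 * (2 * b x * f x)
          - (A ^ 2 * (12 * β * (a x ^ 2 * b x * c x) - 28 * A / 3 * β * (a x ^ 3 * b x * c x)
            - 12 * ε * (a x ^ 2 * b x ^ 2)) + ε ^ 2 * (2 * A * (a x * b x * c x) - 2 * ε * c x ^ 2))) :=
      integ (R := R) (by fun_prop)
        (fun y hy => by simp [za y hy, zb y hy, zc y hy])
    have h0 := integral_eq_zero_of_hasDerivAt_of_integrable hQ iQ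
      (integ (R := R) (by fun_prop)
        (fun y hy => by simp [za y hy, zb y hy, zc y hy]))
    have hle : ∫ x, (A ^ 2 * (4 * a x ^ 3 * e x) + ε ^ 2 * (2 * b x * f x)) - K * c x ^ 2 ≤
        ∫ x, (A ^ 2 * (4 * a x ^ 3 * e x) + ε ^ 2 * (2 * b x * f x)
          - (A ^ 2 * (12 * β * (a x ^ 2 * b x * c x) - 28 * A / 3 * β * (a x ^ 3 * b x * c x)
            - 12 * ε * (a x ^ 2 * b x ^ 2)) + ε ^ 2 * (2 * A * (a x * b x * c x) - 2 * ε * c x ^ 2))) := by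
      refine integral_mono (((i3.const_mul _).add (i2.const_mul _)).sub (i5.const_mul _)) iQ ?_
      intro x
      refine sub_le_sub_left ?_ _
      exact pw hε (hm x)
    have j1 : Integrable fun x => A ^ 2 * (4 * a x ^ 3 * e x) + ε ^ 2 * (2 * b x * f x) :=
      (i3.const_mul _).add (i2.const_mul _)
    rw [h0, integral_sub j1 (i5.const_mul _),
      integral_add (i3.const_mul _) (i2.const_mul _), integral_const_mul, integral_const_mul,
      integral_const_mul] at hle
    linarith

end KS

namespace KS

lemma ode {A C₀ ε β κ K₁ K₂ : ℝ} {F G H V F' G' H' : ℝ → ℝ} (hA : A ≠ 0) (hC₀ : 0 < C₀)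
    (hε : 0 < ε) (hβ : 0 < β) (hκ : 0 < κ)
    (hβκ : β ≤ κ * ε ^ 4) (hK₁ : K₁ = 9 * A ^ 2 * (C₀ * √κ)) (hK₂ : K₂ = 49 / 9 * A ^ 4 * (κ * C₀))
    (hF : ∀ t, HasDerivAt F (F' t) t) (hG : ∀ t, HasDerivAt G (G' t) t)
    (hH : ∀ t, HasDerivAt H (H' t) t) (hV : Continuous V)
    (pF : ∀ t, 0 ≤ F t) (pG : ∀ t, 0 ≤ G t) (pH : ∀ t, 0 ≤ H t) (pV : ∀ t, 0 ≤ V t)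
    (h1 : ∀ t, 0 ≤ t → F' t + β * G' t = -2 * ε * G t - 2 * ε * β * V t)
    (h2 : ∀ t, 0 ≤ t → A ^ 2 * H' t + ε ^ 2 * G' t ≤ (9 * A ^ 2 * (β ^ 2 * √(F t * G t) / ε)
      + 49 / 9 * A ^ 4 * (β ^ 2 * √(F t * G t) ^ 2 / ε) - ε ^ 3) * V t)
    (h0 : F 0 + H 0 + (β + ε ^ 2) * G 0 ≤ C₀) (t : ℝ) (ht : 0 ≤ t) :
    ε ^ 3 * (∫ s in (0:ℝ)..t, V s) ≤ ((A ^ 2 + 1) * C₀ + K₁ / K₂) * Real.exp (K₂ * C₀ / 2) := by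
  have hA2 : 0 < A ^ 2 := by positivity
  have hA4 : 0 < A ^ 4 := by positivity
  have hK₂p : 0 < K₂ := by rw [hK₂]; positivity
  have hK₁p : 0 < K₁ := by rw [hK₁]; positivity
  have hS : ∀ t, HasDerivAt (fun t => F t + β * G t) (F' t + β * G' t) t := fun t =>
    (hF t).add ((hG t).const_mul β)
  have pβG : ∀ t, 0 ≤ β * G t := fun t => mul_nonneg hβ.le (pG t)
  have pεG : ∀ t, 0 ≤ ε ^ 2 * G t := fun t => mul_nonneg (by positivity) (pG t)
  have hSa : AntitoneOn (fun t => F t + β * G t) (Set.Ici 0) := by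
    refine antitoneOn_of_deriv_nonpos (convex_Ici 0)
      (fun x _ => (hS x).continuousAt.continuousWithinAt)
      (fun x _ => (hS x).differentiableAt.differentiableWithinAt) ?_
    intro x hx
    rw [interior_Ici] at hx
    have hx : 0 ≤ x := le_of_lt hx
    rw [(hS x).deriv, h1 x hx]
    have := mul_nonneg hε.le (pG x)
    have := mul_nonneg (mul_nonneg hε.le hβ.le) (pV x)
    nlinarith
  have hS0 : F 0 + β * G 0 ≤ C₀ := by nlinarith [pεG 0, pH 0]
  have hSC : ∀ s, 0 ≤ s → F s + β * G s ≤ C₀ := fun s hs =>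
    (hSa (Set.mem_Ici.2 le_rfl) (Set.mem_Ici.2 hs) hs).trans hS0
  have hE0 : A ^ 2 * H 0 + ε ^ 2 * G 0 ≤ (A ^ 2 + 1) * C₀ := by
    have a1 : H 0 ≤ C₀ := by nlinarith [pεG 0, pF 0, pβG 0]
    have a2 : ε ^ 2 * G 0 ≤ C₀ := by nlinarith [pH 0, pF 0, pβG 0]
    nlinarith
  -- differential inequality
  have hE : ∀ s, 0 ≤ s → A ^ 2 * H' s + ε ^ 2 * G' s ≤
      (K₁ + K₂ * (A ^ 2 * H s + ε ^ 2 * G s)) * (β * ε * V s) - ε ^ 3 * V s := by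
    intro s hs
    have hFG : 0 ≤ F s * G s := mul_nonneg (pF s) (pG s)
    set m := √(F s * G s) with hm
    have hm0 : 0 ≤ m := Real.sqrt_nonneg _
    have hm2 : m ^ 2 = F s * G s := Real.sq_sqrt hFG
    have hSs := hSC s hs
    have hFC : F s ≤ C₀ := by linarith [pβG s]
    have hGC : β * G s ≤ C₀ := by linarith [pF s]
    have b1 : β * m ≤ C₀ * √κ * ε ^ 2 := by
      refine abs_le_of_sq_le_sq' ?_ (by positivity) |>.2
      have : F s * (β * G s) ≤ C₀ * C₀ := mul_le_mul hFC hGC (pβG s) hC₀.le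
      calc (β * m) ^ 2 = β * (F s * (β * G s)) := by rw [mul_pow, hm2]; ring
        _ ≤ (κ * ε ^ 4) * (C₀ * C₀) := mul_le_mul hβκ this (mul_nonneg (pF s) (pβG s)) (by positivity)
        _ = C₀ ^ 2 * (√κ) ^ 2 * ε ^ 4 := by rw [Real.sq_sqrt hκ.le]; ring
        _ = _ := by ring
    have b2 : β * m ^ 2 ≤ κ * C₀ * (A ^ 2 * H s + ε ^ 2 * G s) * ε ^ 2 := by
      rw [hm2]
      have c1 : F s * G s ≤ C₀ * G s := mul_le_mul_of_nonneg_right hFC (pG s)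
      have c2 : 0 ≤ κ * C₀ * (A ^ 2 * H s) * ε ^ 2 := by
        have := pH s
        positivity
      calc β * (F s * G s) ≤ (κ * ε ^ 4) * (C₀ * G s) := mul_le_mul hβκ c1 hFG (by positivity)
        _ ≤ _ := by nlinarith
    have hv : 0 ≤ β / ε * V s := mul_nonneg (by positivity) (pV s)
    have b3 : 9 * A ^ 2 * (β * m) + 49 / 9 * A ^ 4 * (β * m ^ 2)
        ≤ (K₁ + K₂ * (A ^ 2 * H s + ε ^ 2 * G s)) * ε ^ 2 := by
      rw [hK₁, hK₂]
      have c1 := mul_le_mul_of_nonneg_left b1 (by positivity : 0 ≤ 9 * A ^ 2)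
      have c2 := mul_le_mul_of_nonneg_left b2 (by positivity : 0 ≤ 49 / 9 * A ^ 4)
      linarith
    have b4 := mul_le_mul_of_nonneg_right b3 hv
    have e1 : (9 * A ^ 2 * (β ^ 2 * m / ε) + 49 / 9 * A ^ 4 * (β ^ 2 * m ^ 2 / ε) - ε ^ 3) * V s
        = (9 * A ^ 2 * (β * m) + 49 / 9 * A ^ 4 * (β * m ^ 2)) * (β / ε * V s) - ε ^ 3 * V s := by
      ring
    have e2 : (K₁ + K₂ * (A ^ 2 * H s + ε ^ 2 * G s)) * ε ^ 2 * (β / ε * V s)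
        = (K₁ + K₂ * (A ^ 2 * H s + ε ^ 2 * G s)) * (β * ε * V s) := by
      field_simp
    have := h2 s hs
    rw [e1] at this
    rw [e2] at b4
    linarith
  -- Lyapunov functional
  let Ψ : ℝ → ℝ := fun s => (A ^ 2 * H s + ε ^ 2 * G s + K₁ / K₂)
    * Real.exp (K₂ / 2 * (F s + β * G s)) + ε ^ 3 * ∫ r in (0:ℝ)..s, V r
  have hΨ : ∀ s, HasDerivAt Ψ ((A ^ 2 * H' s + ε ^ 2 * G' s) * Real.exp (K₂ / 2 * (F s + β * G s))
      + (A ^ 2 * H s + ε ^ 2 * G s + K₁ / K₂) * (Real.exp (K₂ / 2 * (F s + β * G s))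
        * (K₂ / 2 * (F' s + β * G' s))) + ε ^ 3 * V s) s := by
    intro s
    exact (((((hH s).const_mul (A ^ 2)).add ((hG s).const_mul (ε ^ 2))).add_const (K₁ / K₂)).mul
      (((hS s).const_mul (K₂ / 2)).exp)).add
      ((intervalIntegral.integral_hasDerivAt_right (hV.intervalIntegrable _ _)
        hV.stronglyMeasurable.stronglyMeasurableAtFilter hV.continuousAt).const_mul (ε ^ 3))
  have hΨa : AntitoneOn Ψ (Set.Ici 0) := by
    refine antitoneOn_of_deriv_nonpos (convex_Ici 0)
      (fun x _ => (hΨ x).continuousAt.continuousWithinAt)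
      (fun x _ => (hΨ x).differentiableAt.differentiableWithinAt) ?_
    intro s hx
    rw [interior_Ici] at hx
    have hx : 0 ≤ s := le_of_lt hx
    rw [(hΨ s).deriv, h1 s hx]
    have hEp : 0 ≤ A ^ 2 * H s + ε ^ 2 * G s := add_nonneg (mul_nonneg hA2.le (pH s)) (pεG s)
    have hSp : 0 ≤ K₂ / 2 * (F s + β * G s) :=
      mul_nonneg (by positivity) (add_nonneg (pF s) (pβG s))
    have hX : 1 ≤ Real.exp (K₂ / 2 * (F s + β * G s)) := Real.one_le_exp hSp
    have hEs := hE s hx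
    set E := A ^ 2 * H s + ε ^ 2 * G s with hEdef
    set X := Real.exp (K₂ / 2 * (F s + β * G s)) with hXdef
    have hX0 : 0 ≤ X := by linarith
    have d1 : (A ^ 2 * H' s + ε ^ 2 * G' s) * X ≤
        ((K₁ + K₂ * E) * (β * ε * V s) - ε ^ 3 * V s) * X := mul_le_mul_of_nonneg_right hEs hX0
    have d2 : (E + K₁ / K₂) * (X * (K₂ / 2 * (-2 * ε * G s - 2 * ε * β * V s)))
        = - ((K₁ + K₂ * E) * (β * ε * V s)) * X - (K₁ + K₂ * E) * X * (ε * G s) := by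
      field_simp
      ring
    have d3 : 0 ≤ (K₁ + K₂ * E) * X * (ε * G s) :=
      mul_nonneg (mul_nonneg (by positivity) hX0) (mul_nonneg hε.le (pG s))
    have d4 : ε ^ 3 * V s * 1 ≤ ε ^ 3 * V s * X :=
      mul_le_mul_of_nonneg_left hX (mul_nonneg (by positivity) (pV s))
    rw [d2]
    linarith
  have hfin : Ψ t ≤ Ψ 0 := hΨa (Set.mem_Ici.2 le_rfl) (Set.mem_Ici.2 ht) ht
  simp only [Ψ, intervalIntegral.integral_same, mul_zero, add_zero] at hfin
  have hEp : 0 ≤ A ^ 2 * H t + ε ^ 2 * G t := add_nonneg (mul_nonneg hA2.le (pH t)) (pεG t)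
  have p1 : 0 ≤ (A ^ 2 * H t + ε ^ 2 * G t + K₁ / K₂) * Real.exp (K₂ / 2 * (F t + β * G t)) := by
    positivity
  have p2 : (A ^ 2 * H 0 + ε ^ 2 * G 0 + K₁ / K₂) * Real.exp (K₂ / 2 * (F 0 + β * G 0))
      ≤ ((A ^ 2 + 1) * C₀ + K₁ / K₂) * Real.exp (K₂ * C₀ / 2) := by
    refine mul_le_mul (by linarith) (Real.exp_le_exp.2 ?_) (Real.exp_pos _).le (by positivity)
    have := mul_le_mul_of_nonneg_left hS0 (by positivity : 0 ≤ K₂ / 2)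
    linarith
  linarith

end KS

/-- Estimate `β² ∫₀ᵗ ‖∂ₓ²u‖²_{L²} ds ≤ M ε⁵`. -/
theorem stmt_11 (A C₀ : ℝ) (hA : A ≠ 0) (hC₀pos : 0 < C₀) :
    ∃ M : ℝ, 0 < M ∧
      ∀ (ε β : ℝ) (u : ℝ → ℝ → ℝ),
        0 < ε → 0 < β →
        ContDiff ℝ (⊤ : ℕ∞) (Function.uncurry u) →
        (∃ R > (0:ℝ), ∀ t x : ℝ, R ≤ |x| → u t x = 0) →
        (∀ t : ℝ, 0 ≤ t → ∀ x : ℝ,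
          deriv (fun τ => u τ x) t
            + A * u t x * deriv (u t) x
            + β * deriv (deriv (deriv (u t))) x
            - (2 * A / 3) * β * deriv (fun y => u t y * deriv (deriv (u t)) y) x
            - (-(A / 3)) * β * deriv (u t) x * deriv (deriv (u t)) x
            - ε * deriv (deriv (u t)) x = 0) →
        ((∫ x : ℝ, (u 0 x) ^ 2) + (∫ x : ℝ, (u 0 x) ^ 4)
            + (β + ε ^ 2) * (∫ x : ℝ, (deriv (u 0) x) ^ 2) ≤ C₀) →
        β ≤ ε ^ 4 / (Real.sqrt C₀ * A ^ 2) →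
        ∀ t : ℝ, 0 ≤ t →
          β ^ 2 * (∫ s in (0:ℝ)..t, ∫ x : ℝ, (deriv (deriv (u s)) x) ^ 2) ≤ M * ε ^ 5 := by
  have hA2 : 0 < A ^ 2 := by positivity
  have hA4 : 0 < A ^ 4 := by positivity
  have hsC : 0 < √C₀ := Real.sqrt_pos.2 hC₀pos
  obtain ⟨κ, hκdef⟩ : ∃ κ, κ = 1 / (√C₀ * A ^ 2) := ⟨_, rfl⟩
  have hκ : 0 < κ := by rw [hκdef]; positivity
  obtain ⟨K₁, hK₁⟩ : ∃ K₁, K₁ = 9 * A ^ 2 * (C₀ * √κ) := ⟨_, rfl⟩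
  obtain ⟨K₂, hK₂⟩ : ∃ K₂, K₂ = 49 / 9 * A ^ 4 * (κ * C₀) := ⟨_, rfl⟩
  have hK₂p : 0 < K₂ := by rw [hK₂]; positivity
  have hK₁p : 0 < K₁ := by rw [hK₁]; positivity
  refine ⟨κ ^ 2 * (((A ^ 2 + 1) * C₀ + K₁ / K₂) * Real.exp (K₂ * C₀ / 2)), by positivity, ?_⟩
  intro ε β u hε hβ hu hR hpde hinit hβle t ht
  obtain ⟨R, hRpos, hsupp⟩ := hR
  have S0 : KS.Sm R u := ⟨hu, fun t x hx => hsupp t x hx.le⟩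
  have S1 := S0.dx
  have S2 := S1.dx
  have S3 := S2.dx
  have T0 := S0.dt
  have T1 := T0.dx
  have T1' := S1.dt
  have hβκ : β ≤ κ * ε ^ 4 := by
    rw [hκdef]
    calc β ≤ _ := hβle
      _ = _ := by ring
  have hF : ∀ t, HasDerivAt (fun τ => ∫ x, u τ x ^ 2) (∫ x, 2 * u t x * KS.Dt u t x) t := by
    intro t
    have hs : KS.Sm R (fun t x => u t x ^ 2) :=
      ⟨S0.1.pow 2, fun t x hx => by simp [S0.2 t x hx]⟩
    convert hs.hasDerivAt_integral t using 3 with x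
    have := ((S0.hasDt t x).fun_pow 2).deriv
    simpa [KS.Dt] using this.symm
  have hG : ∀ t, HasDerivAt (fun τ => ∫ x, KS.Dx u τ x ^ 2)
      (∫ x, 2 * KS.Dx u t x * KS.Dx (KS.Dt u) t x) t := by
    intro t
    have hs : KS.Sm R (fun t x => KS.Dx u t x ^ 2) :=
      ⟨S1.1.pow 2, fun t x hx => by simp [S1.2 t x hx]⟩
    convert hs.hasDerivAt_integral t using 3 with x
    have := ((S1.hasDt t x).fun_pow 2).deriv
    rw [← S0.comm t x]
    show _ = deriv (fun τ => KS.Dx u τ x ^ 2) t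
    rw [this]
    simp
  have hH : ∀ t, HasDerivAt (fun τ => ∫ x, u τ x ^ 4) (∫ x, 4 * u t x ^ 3 * KS.Dt u t x) t := by
    intro t
    have hs : KS.Sm R (fun t x => u t x ^ 4) :=
      ⟨S0.1.pow 4, fun t x hx => by simp [S0.2 t x hx]⟩
    convert hs.hasDerivAt_integral t using 3 with x
    have := ((S0.hasDt t x).fun_pow 4).deriv
    simpa [KS.Dt] using this.symm
  have hV : Continuous (fun τ => ∫ x, KS.Dx (KS.Dx u) τ x ^ 2) := by
    have hs : KS.Sm R (fun t x => KS.Dx (KS.Dx u) t x ^ 2) :=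
      ⟨S2.1.pow 2, fun t x hx => by simp [S2.2 t x hx]⟩
    exact continuous_iff_continuousAt.2 fun t => (hs.hasDerivAt_integral t).continuousAt
  have hsl := fun (t : ℝ) (ht : 0 ≤ t) => KS.slice (R := R) (A := A) (ε := ε) (β := β)
    (m := √((∫ x, u t x ^ 2) * (∫ x, KS.Dx u t x ^ 2))) hε
    (S0.hasDx t) (S1.hasDx t) (S2.hasDx t) (T0.hasDx t) (T1.cont t)
    (S0.2 t) (S1.2 t) (S2.2 t)
    (fun x => by
      have hp := hpde t ht x
      have hprod : deriv (fun y => u t y * deriv (deriv (u t)) y) x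
          = KS.Dx u t x * KS.Dx (KS.Dx u) t x + u t x * KS.Dx (KS.Dx (KS.Dx u)) t x :=
        ((S0.hasDx t x).mul (S2.hasDx t x)).deriv
      rw [hprod] at hp
      exact hp)
    (fun x => by
      apply Real.le_sqrt_of_sq_le
      have := KS.sup_bound (S0.hasDx t) (S1.cont t) (S0.2 t) (S1.2 t) x
      calc (u t x ^ 2) ^ 2 = u t x ^ 4 := by ring
        _ ≤ _ := this)
  have main := KS.ode hA hC₀pos hε hβ hκ hβκ hK₁ hK₂ hF hG hH hV
    (fun t => integral_nonneg fun x => sq_nonneg _)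
    (fun t => integral_nonneg fun x => sq_nonneg _)
    (fun t => integral_nonneg fun x => by positivity)
    (fun t => integral_nonneg fun x => sq_nonneg _)
    (fun t ht => (hsl t ht).1) (fun t ht => (hsl t ht).2) hinit t ht
  change β ^ 2 * (∫ s in (0:ℝ)..t, ∫ x : ℝ, (KS.Dx (KS.Dx u) s x) ^ 2) ≤ _
  have hI : 0 ≤ ∫ s in (0:ℝ)..t, ∫ x : ℝ, (KS.Dx (KS.Dx u) s x) ^ 2 :=
    intervalIntegral.integral_nonneg ht fun s _ => integral_nonneg fun x => sq_nonneg _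
  have hβ2 : β ^ 2 ≤ (κ * ε ^ 4) ^ 2 := pow_le_pow_left₀ hβ.le hβκ 2
  calc _ ≤ (κ * ε ^ 4) ^ 2 * (∫ s in (0:ℝ)..t, ∫ x : ℝ, (KS.Dx (KS.Dx u) s x) ^ 2) :=
        mul_le_mul_of_nonneg_right hβ2 hI
    _ = κ ^ 2 * ε ^ 5 * (ε ^ 3 * (∫ s in (0:ℝ)..t, ∫ x : ℝ, (KS.Dx (KS.Dx u) s x) ^ 2)) := by ring
    _ ≤ κ ^ 2 * ε ^ 5 * (((A ^ 2 + 1) * C₀ + K₁ / K₂) * Real.exp (K₂ * C₀ / 2)) :=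
        mul_le_mul_of_nonneg_left main (by positivity)
    _ = _ := by ring
end

section
/- There exists a constant M > 0, depending only on A and C₀, such that for every t ≥ 0 one has β ∫₀ᵗ ∫_ℝ |u(s,x)| · |∂ₓu(s,x)| · |∂ₓ²u(s,x)| dx ds ≤ M ε. -/
open MeasureTheory

namespace KS

/-- Continuous in both variables, with `x`-support in `[-R, R]`. -/
structure CS (R : ℝ) (F : ℝ → ℝ → ℝ) : Prop where
  cont : Continuous (fun p : ℝ × ℝ => F p.1 p.2)
  zero : ∀ t x, R < |x| → F t x = 0

lemma CS.slice {R : ℝ} {F : ℝ → ℝ → ℝ} (h : CS R F) (t : ℝ) : Continuous (F t) :=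
  h.cont.comp (Continuous.prodMk_right t)

lemma CS.integrable {R : ℝ} {F : ℝ → ℝ → ℝ} (h : CS R F) (t : ℝ) : Integrable (F t) := by
  refine (h.slice t).integrable_of_hasCompactSupport ?_
  refine HasCompactSupport.intro (isCompact_Icc (a := -R) (b := R)) fun x hx => h.zero t x ?_
  by_contra hc
  exact hx (abs_le.mp (not_lt.mp hc))

lemma setInt_eq {R : ℝ} {F : ℝ → ℝ → ℝ} (h : CS R F) (t : ℝ) :
    ∫ x in Set.Icc (-R) R, F t x = ∫ x, F t x := by
  refine setIntegral_eq_integral_of_forall_compl_eq_zero fun x hx => h.zero t x ?_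
  by_contra hc
  exact hx (abs_le.mp (not_lt.mp hc))

lemma CS.cont_int {R : ℝ} {F : ℝ → ℝ → ℝ} (h : CS R F) : Continuous (fun t => ∫ x, F t x) := by
  have := continuous_parametric_integral_of_continuous (μ := (volume : Measure ℝ)) (f := F)
    h.cont (isCompact_Icc (a := -R) (b := R))
  simpa only [setInt_eq h] using this

lemma hasDerivAt_int {R : ℝ} {F F' : ℝ → ℝ → ℝ} (h : CS R F) (h' : CS R F')
    (hd : ∀ t x, HasDerivAt (fun τ => F τ x) (F' t x) t) (t : ℝ) :
    HasDerivAt (fun τ => ∫ x, F τ x) (∫ x, F' t x) t := by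
  obtain ⟨C, hC⟩ := ((isCompact_Icc (a := t - 1) (b := t + 1)).prod
    (isCompact_Icc (a := -R) (b := R))).exists_bound_of_continuousOn h'.cont.continuousOn
  refine (hasDerivAt_integral_of_dominated_loc_of_deriv_le (F := F) (F' := F') (x₀ := t)
    (s := Set.Icc (t - 1) (t + 1)) (bound := Set.indicator (Set.Icc (-R) R) (fun _ => C))
    (Icc_mem_nhds (by linarith) (by linarith))
    (Filter.Eventually.of_forall fun s => (h.slice s).aestronglyMeasurable)
    (h.integrable t) (h'.slice t).aestronglyMeasurable
    (Filter.Eventually.of_forall fun x s hs => ?_) ?_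
    (Filter.Eventually.of_forall fun x s _ => hd s x)).2
  · by_cases hx : x ∈ Set.Icc (-R) R
    · rw [Set.indicator_of_mem hx]
      exact hC (s, x) ⟨hs, hx⟩
    · rw [Set.indicator_of_notMem hx, h'.zero s x, norm_zero]
      by_contra hc
      exact hx (abs_le.mp (not_lt.mp hc))
  · rw [integrable_indicator_iff measurableSet_Icc]
    exact integrableOn_const (by simp)

lemma sup_bound_s13 {R c : ℝ} (hc : 0 < c) {u u1 : ℝ → ℝ → ℝ} (h : CS R u) (h1 : CS R u1)
    (t x : ℝ) (hd : ∀ x, HasDerivAt (u t) (u1 t x) x) :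
    c * u t x ^ 2 ≤ ∫ y, (u t y ^ 2 + c ^ 2 * u1 t y ^ 2) := by
  have hq : CS R (fun t y => u t y ^ 2 + c ^ 2 * u1 t y ^ 2) := by
    refine ⟨?_, fun t x hx => by simp [h.zero t x hx, h1.zero t x hx]⟩
    have := h.cont
    have := h1.cont
    fun_prop
  have hu := h.slice t
  have hu1 := h1.slice t
  obtain ⟨a, ha, hax⟩ : ∃ a : ℝ, R < |a| ∧ a ≤ x := by
    refine ⟨-(|R| + |x| + 1), ?_, ?_⟩
    · rw [abs_neg, abs_of_pos (by positivity)]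
      linarith [le_abs_self R, abs_nonneg x]
    · linarith [neg_abs_le x, abs_nonneg R]
  have hftc : ∫ y in a..x, c * (2 * u t y * u1 t y) = c * u t x ^ 2 - c * u t a ^ 2 := by
    refine intervalIntegral.integral_eq_sub_of_hasDerivAt (f := fun y => c * u t y ^ 2)
      (fun y _ => ?_) (Continuous.intervalIntegrable (by fun_prop) _ _)
    refine HasDerivAt.congr_deriv (((hd y).pow 2).const_mul c) ?_
    push_cast
    ring
  rw [h.zero t a ha] at hftc
  calc c * u t x ^ 2 = ∫ y in a..x, c * (2 * u t y * u1 t y) := by rw [hftc]; ring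
    _ ≤ ∫ y in a..x, (u t y ^ 2 + c ^ 2 * u1 t y ^ 2) := by
        refine intervalIntegral.integral_mono_on hax (Continuous.intervalIntegrable (by fun_prop) _ _)
          (Continuous.intervalIntegrable (by fun_prop) _ _) fun y _ => ?_
        nlinarith [sq_nonneg (u t y - c * u1 t y)]
    _ ≤ _ := by
        rw [intervalIntegral.integral_of_le hax]
        exact setIntegral_le_integral (hq.integrable t)
          (Filter.Eventually.of_forall fun y => by positivity)

lemma int_le {f f' g : ℝ → ℝ} (hf : ∀ t, HasDerivAt f (f' t) t) (hf' : Continuous f')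
    (hg : Continuous g) {t : ℝ} (ht : 0 ≤ t) (h : ∀ s, 0 ≤ s → s ≤ t → f' s ≤ - g s) :
    ∫ s in (0:ℝ)..t, g s ≤ f 0 - f t := by
  have h1 := intervalIntegral.integral_eq_sub_of_hasDerivAt (a := 0) (b := t)
    (fun y _ => hf y) (hf'.intervalIntegrable _ _)
  have h2 : ∫ s in (0:ℝ)..t, f' s ≤ ∫ s in (0:ℝ)..t, - g s :=
    intervalIntegral.integral_mono_on ht (hf'.intervalIntegrable _ _)
      (hg.neg.intervalIntegrable _ _) fun s hs => h s hs.1 hs.2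
  rw [intervalIntegral.integral_neg] at h2
  linarith

/-- Barrier argument. -/
lemma barrier {f f' : ℝ → ℝ} (hf : ∀ t, HasDerivAt f (f' t) t) {L : ℝ} (hL : 0 < L)
    (h0 : f 0 ≤ L) (h : ∀ t, 0 ≤ t → f t ≤ 2 * L → f' t ≤ 0) {t : ℝ} (ht : 0 ≤ t) :
    f t ≤ 2 * L := by
  have hd : 0 < L / (t + 1) := by positivity
  have hbd : ∀ x, x ≤ t → L + L / (t + 1) * x ≤ 2 * L := by
    intro x hx
    have : L / (t + 1) * x ≤ L / (t + 1) * (t + 1) := by gcongr; linarith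
    rw [div_mul_cancel₀ _ (by positivity)] at this
    linarith
  have := image_le_of_deriv_right_lt_deriv_boundary' (f := f) (f' := f') (a := 0) (b := t)
    (B := fun x => L + L / (t + 1) * x) (B' := fun _ => L / (t + 1))
    (fun x _ => (hf x).continuousAt.continuousWithinAt)
    (fun x _ => (hf x).hasDerivWithinAt) (by simpa using h0)
    (by fun_prop)
    (fun x _ => by
      have := ((hasDerivAt_id x).const_mul (L / (t + 1))).const_add L
      simpa using this.hasDerivWithinAt)
    (fun x hx hfx => lt_of_le_of_lt (h x hx.1 (by rw [hfx]; exact hbd x hx.2.le)) hd)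
    (Set.right_mem_Icc.mpr ht)
  exact this.trans (hbd t le_rfl)

/-- All the data of a solution, with derivatives named. -/
structure Sol (A ε β R : ℝ) (u u1 u2 u3 w w1 : ℝ → ℝ → ℝ) : Prop where
  c0 : CS R u
  c1 : CS R u1
  c2 : CS R u2
  c3 : CS R u3
  cw : CS R w
  cw1 : CS R w1
  d0 : ∀ t x, HasDerivAt (u t) (u1 t x) x
  d1 : ∀ t x, HasDerivAt (u1 t) (u2 t x) x
  d2 : ∀ t x, HasDerivAt (u2 t) (u3 t x) x
  dw : ∀ t x, HasDerivAt (w t) (w1 t x) x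
  e0 : ∀ t x, HasDerivAt (fun τ => u τ x) (w t x) t
  e1 : ∀ t x, HasDerivAt (fun τ => u1 τ x) (w1 t x) t
  pde : ∀ t, 0 ≤ t → ∀ x, w t x = - A * u t x * u1 t x - β * u3 t x
    + A / 3 * β * u1 t x * u2 t x + 2 * A / 3 * β * u t x * u3 t x + ε * u2 t x

variable {A ε β R : ℝ} {u u1 u2 u3 w w1 : ℝ → ℝ → ℝ}

lemma energyE (S : Sol A ε β R u u1 u2 u3 w w1) (t : ℝ) (ht : 0 ≤ t) :
    ∫ x, (2 * u t x * w t x + β * (2 * u1 t x * w1 t x))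
      = ∫ x, (-2 * ε * u1 t x ^ 2 - 2 * β * ε * u2 t x ^ 2) := by
  obtain ⟨c0, c1, c2, c3, cw, cw1, d0, d1, d2, dw, e0, e1, pde⟩ := S
  have k0 := c0.cont
  have k1 := c1.cont
  have k2 := c2.cont
  have k3 := c3.cont
  have kw := cw.cont
  have kw1 := cw1.cont
  have hI1 : CS R (fun t x => 2 * u t x * w t x + β * (2 * u1 t x * w1 t x)) :=
    ⟨by fun_prop, fun t x hx => by simp [c0.zero t x hx, c1.zero t x hx]⟩
  have hI2 : CS R (fun t x => -2 * ε * u1 t x ^ 2 - 2 * β * ε * u2 t x ^ 2) :=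
    ⟨by fun_prop, fun t x hx => by simp [c2.zero t x hx, c1.zero t x hx]⟩
  have hG : CS R (fun t x => 2 * β * (u1 t x * w t x) - 2 * A / 3 * u t x ^ 3
      - 2 * β * (u t x * u2 t x) + β * u1 t x ^ 2 + 4 * A / 3 * β * (u t x ^ 2 * u2 t x)
      + 2 * ε * (u t x * u1 t x) + β ^ 2 * u2 t x ^ 2
      - 2 * A / 3 * β ^ 2 * (u t x * u2 t x ^ 2)) :=
    ⟨by fun_prop, fun t x hx => by simp [c0.zero t x hx, c1.zero t x hx, c2.zero t x hx]⟩
  rw [← sub_eq_zero, ← integral_sub (hI1.integrable t) (hI2.integrable t)]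
  refine integral_eq_zero_of_hasDerivAt_of_integrable (fun x => ?_)
    ((hI1.integrable t).sub (hI2.integrable t)) (hG.integrable t)
  have D0 := d0 t x
  have D1 := d1 t x
  have D2 := d2 t x
  have Dw := dw t x
  have := (((((((((D1.mul Dw).const_mul (2 * β)).sub ((D0.pow 3).const_mul (2 * A / 3))).sub
    ((D0.mul D2).const_mul (2 * β))).add ((D1.pow 2).const_mul β)).add
    (((D0.pow 2).mul D2).const_mul (4 * A / 3 * β))).add ((D0.mul D1).const_mul (2 * ε))).add
    ((D2.pow 2).const_mul (β ^ 2))).sub ((D0.mul (D2.pow 2)).const_mul (2 * A / 3 * β ^ 2)))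
  refine HasDerivAt.congr_deriv this ?_
  simp only [Pi.pow_apply, pde t ht x]
  push_cast
  ring

lemma energyPhi (S : Sol A ε β R u u1 u2 u3 w w1) (t : ℝ) (ht : 0 ≤ t) :
    ∫ x, (A ^ 2 * (4 * u t x ^ 3 * w t x) + ε ^ 2 * (2 * u1 t x * w1 t x))
      = ∫ x, (12 * A ^ 2 * β * u t x ^ 2 * u1 t x * u2 t x
        - 28 / 3 * A ^ 3 * β * u t x ^ 3 * u1 t x * u2 t x
        - 12 * A ^ 2 * ε * u t x ^ 2 * u1 t x ^ 2
        + 2 * A * ε ^ 2 * u t x * u1 t x * u2 t x - 2 * ε ^ 3 * u2 t x ^ 2) := by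
  obtain ⟨c0, c1, c2, c3, cw, cw1, d0, d1, d2, dw, e0, e1, pde⟩ := S
  have k0 := c0.cont
  have k1 := c1.cont
  have k2 := c2.cont
  have k3 := c3.cont
  have kw := cw.cont
  have kw1 := cw1.cont
  have hI1 : CS R (fun t x => A ^ 2 * (4 * u t x ^ 3 * w t x) + ε ^ 2 * (2 * u1 t x * w1 t x)) :=
    ⟨by fun_prop, fun t x hx => by simp [c0.zero t x hx, c1.zero t x hx]⟩
  have hI2 : CS R (fun t x => 12 * A ^ 2 * β * u t x ^ 2 * u1 t x * u2 t x
        - 28 / 3 * A ^ 3 * β * u t x ^ 3 * u1 t x * u2 t x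
        - 12 * A ^ 2 * ε * u t x ^ 2 * u1 t x ^ 2
        + 2 * A * ε ^ 2 * u t x * u1 t x * u2 t x - 2 * ε ^ 3 * u2 t x ^ 2) :=
    ⟨by fun_prop, fun t x hx => by simp [c2.zero t x hx, c1.zero t x hx]⟩
  have hG : CS R (fun t x => 2 * ε ^ 2 * (u1 t x * w t x) - 4 * A ^ 3 / 5 * u t x ^ 5
      - 4 * A ^ 2 * β * (u t x ^ 3 * u2 t x) + 8 * A ^ 3 / 3 * β * (u t x ^ 4 * u2 t x)
      + 4 * A ^ 2 * ε * (u t x ^ 3 * u1 t x) + ε ^ 2 * β * u2 t x ^ 2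
      - 2 * A / 3 * ε ^ 2 * β * (u t x * u2 t x ^ 2)) :=
    ⟨by fun_prop, fun t x hx => by simp [c0.zero t x hx, c1.zero t x hx, c2.zero t x hx]⟩
  rw [← sub_eq_zero, ← integral_sub (hI1.integrable t) (hI2.integrable t)]
  refine integral_eq_zero_of_hasDerivAt_of_integrable (fun x => ?_)
    ((hI1.integrable t).sub (hI2.integrable t)) (hG.integrable t)
  have D0 := d0 t x
  have D1 := d1 t x
  have D2 := d2 t x
  have Dw := dw t x
  have := ((((((((D1.mul Dw).const_mul (2 * ε ^ 2)).sub ((D0.pow 5).const_mul (4 * A ^ 3 / 5))).sub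
    (((D0.pow 3).mul D2).const_mul (4 * A ^ 2 * β))).add
    (((D0.pow 4).mul D2).const_mul (8 * A ^ 3 / 3 * β))).add
    (((D0.pow 3).mul D1).const_mul (4 * A ^ 2 * ε))).add
    ((D2.pow 2).const_mul (ε ^ 2 * β))).sub
    ((D0.mul (D2.pow 2)).const_mul (2 * A / 3 * ε ^ 2 * β)))
  refine HasDerivAt.congr_deriv this ?_
  simp only [Pi.pow_apply, pde t ht x]
  push_cast
  ring

lemma hasDerivE (S : Sol A ε β R u u1 u2 u3 w w1) (t : ℝ) :
    HasDerivAt (fun τ => ∫ x, (u τ x ^ 2 + β * u1 τ x ^ 2))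
      (∫ x, (2 * u t x * w t x + β * (2 * u1 t x * w1 t x))) t := by
  obtain ⟨c0, c1, c2, c3, cw, cw1, d0, d1, d2, dw, e0, e1, pde⟩ := S
  have k0 := c0.cont
  have k1 := c1.cont
  have kw := cw.cont
  have kw1 := cw1.cont
  refine hasDerivAt_int (R := R) (F := fun τ x => u τ x ^ 2 + β * u1 τ x ^ 2)
    (F' := fun t x => 2 * u t x * w t x + β * (2 * u1 t x * w1 t x))
    ⟨by fun_prop, fun t x hx => by simp [c0.zero t x hx, c1.zero t x hx]⟩
    ⟨by fun_prop, fun t x hx => by simp [c0.zero t x hx, c1.zero t x hx]⟩ (fun t x => ?_) t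
  refine HasDerivAt.congr_deriv (((e0 t x).pow 2).add (((e1 t x).pow 2).const_mul β)) ?_
  push_cast
  ring

lemma contE (S : Sol A ε β R u u1 u2 u3 w w1) :
    Continuous (fun t => ∫ x, (2 * u t x * w t x + β * (2 * u1 t x * w1 t x))) := by
  have k0 := S.c0.cont
  have k1 := S.c1.cont
  have kw := S.cw.cont
  have kw1 := S.cw1.cont
  exact CS.cont_int (R := R) (F := fun t x => 2 * u t x * w t x + β * (2 * u1 t x * w1 t x))
    ⟨by fun_prop, fun t x hx => by simp [S.c0.zero t x hx, S.c1.zero t x hx]⟩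

lemma hasDerivPhi (S : Sol A ε β R u u1 u2 u3 w w1) (t : ℝ) :
    HasDerivAt (fun τ => ∫ x, (A ^ 2 * u τ x ^ 4 + ε ^ 2 * u1 τ x ^ 2))
      (∫ x, (A ^ 2 * (4 * u t x ^ 3 * w t x) + ε ^ 2 * (2 * u1 t x * w1 t x))) t := by
  obtain ⟨c0, c1, c2, c3, cw, cw1, d0, d1, d2, dw, e0, e1, pde⟩ := S
  have k0 := c0.cont
  have k1 := c1.cont
  have kw := cw.cont
  have kw1 := cw1.cont
  refine hasDerivAt_int (R := R) (F := fun τ x => A ^ 2 * u τ x ^ 4 + ε ^ 2 * u1 τ x ^ 2)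
    (F' := fun t x => A ^ 2 * (4 * u t x ^ 3 * w t x) + ε ^ 2 * (2 * u1 t x * w1 t x))
    ⟨by fun_prop, fun t x hx => by simp [c0.zero t x hx, c1.zero t x hx]⟩
    ⟨by fun_prop, fun t x hx => by simp [c0.zero t x hx, c1.zero t x hx]⟩ (fun t x => ?_) t
  refine HasDerivAt.congr_deriv
    ((((e0 t x).pow 4).const_mul (A ^ 2)).add (((e1 t x).pow 2).const_mul (ε ^ 2))) ?_
  push_cast
  ring

lemma contPhi (S : Sol A ε β R u u1 u2 u3 w w1) :
    Continuous (fun t => ∫ x, (A ^ 2 * (4 * u t x ^ 3 * w t x)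
      + ε ^ 2 * (2 * u1 t x * w1 t x))) := by
  have k0 := S.c0.cont
  have k1 := S.c1.cont
  have kw := S.cw.cont
  have kw1 := S.cw1.cont
  exact CS.cont_int (R := R)
    (F := fun t x => A ^ 2 * (4 * u t x ^ 3 * w t x) + ε ^ 2 * (2 * u1 t x * w1 t x))
    ⟨by fun_prop, fun t x hx => by simp [S.c0.zero t x hx, S.c1.zero t x hx]⟩

lemma csP (S : Sol A ε β R u u1 u2 u3 w w1) :
    CS R (fun t x => |u t x| * |u1 t x| * |u2 t x|) := by
  have k0 := S.c0.cont
  have k1 := S.c1.cont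
  have k2 := S.c2.cont
  exact ⟨by fun_prop, fun t x hx => by simp [S.c0.zero t x hx]⟩

lemma cs_sq {F : ℝ → ℝ → ℝ} (h : CS R F) (n : ℕ) (hn : n ≠ 0) : CS R (fun t x => F t x ^ n) :=
  ⟨by have := h.cont; fun_prop, fun t x hx => by simp [h.zero t x hx, hn]⟩

lemma E_le (S : Sol A ε β R u u1 u2 u3 w w1) (hε : 0 < ε) (hβ : 0 < β) {C₀ : ℝ}
    (h0 : ∫ x, (u 0 x ^ 2 + β * u1 0 x ^ 2) ≤ C₀) {t : ℝ} (ht : 0 ≤ t) :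
    ∫ x, (u t x ^ 2 + β * u1 t x ^ 2) ≤ C₀ := by
  have := int_le (g := fun _ => 0) (hasDerivE S) (contE S) continuous_const ht (fun s hs _ => by
    rw [energyE S s hs, neg_zero]
    refine integral_nonpos fun x => ?_
    have h1 : 0 ≤ ε * u1 s x ^ 2 := by positivity
    have h2 : 0 ≤ β * ε * u2 s x ^ 2 := by positivity
    show -2 * ε * u1 s x ^ 2 - 2 * β * ε * u2 s x ^ 2 ≤ 0
    linarith)
  simp at this
  linarith

lemma large (S : Sol A ε β R u u1 u2 u3 w w1) (hε : 0 < ε) (hβ : 0 < β) {C₀ k : ℝ} (hC : 0 < C₀)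
    (hk : 0 < k) (h0 : ∫ x, (u 0 x ^ 2 + β * u1 0 x ^ 2) ≤ C₀) (hβk : β ≤ k ^ 2 * ε ^ 4)
    {t : ℝ} (ht : 0 ≤ t) :
    β * ∫ s in (0:ℝ)..t, ∫ x, |u s x| * |u1 s x| * |u2 s x| ≤ √(k * C₀) * C₀ / 4 := by
  obtain ⟨q, hq, hqβ⟩ : ∃ q : ℝ, 0 < q ∧ q ^ 2 = β :=
    ⟨√β, Real.sqrt_pos.mpr hβ, Real.sq_sqrt hβ.le⟩
  have hqk : q ≤ k * ε ^ 2 := by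
    refine le_of_sq_le_sq ?_ (by positivity)
    rw [hqβ]; linarith [hβk, (by ring : (k * ε ^ 2) ^ 2 = k ^ 2 * ε ^ 4)]
  set m := √(C₀ / q) with hm
  have hm0 : 0 ≤ m := Real.sqrt_nonneg _
  have hm2 : m ^ 2 = C₀ / q := Real.sq_sqrt (by positivity)
  have hum : ∀ s, 0 ≤ s → ∀ x, |u s x| ≤ m := by
    intro s hs x
    have h1 := sup_bound_s13 hq S.c0 S.c1 s x (S.d0 s)
    rw [hqβ] at h1
    have h2 := h1.trans (E_le S hε hβ h0 hs)
    refine abs_le_of_sq_le_sq ?_ hm0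
    rw [hm2, le_div_iff₀ hq]
    linarith
  have hP := csP S
  have key := int_le (g := fun s => 4 * ε * q * ∫ x, |u s x| * |u1 s x| * |u2 s x|)
    (f := fun τ => m * ∫ x, (u τ x ^ 2 + β * u1 τ x ^ 2))
    (fun s => (hasDerivE S s).const_mul m) (continuous_const.mul (contE S))
    (continuous_const.mul hP.cont_int) ht (fun s hs _ => by
      rw [energyE S s hs, ← integral_const_mul, ← integral_const_mul, ← integral_neg]
      have hi1 : CS R (fun s x => m * (-2 * ε * u1 s x ^ 2 - 2 * β * ε * u2 s x ^ 2)) := by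
        have k1 := S.c1.cont
        have k2 := S.c2.cont
        exact ⟨by fun_prop, fun t x hx => by simp [S.c1.zero t x hx, S.c2.zero t x hx]⟩
      refine integral_mono (hi1.integrable s) ((hP.integrable s).const_mul _).neg fun x => ?_
      show m * (-2 * ε * u1 s x ^ 2 - 2 * β * ε * u2 s x ^ 2)
        ≤ -(4 * ε * q * (|u s x| * |u1 s x| * |u2 s x|))
      have hb := hum s hs x
      rw [← hqβ, ← sq_abs (u1 s x), ← sq_abs (u2 s x)]
      have h1 : |u s x| * (4 * ε * q * (|u1 s x| * |u2 s x|))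
          ≤ m * (4 * ε * q * (|u1 s x| * |u2 s x|)) := by gcongr
      have h2 : 0 ≤ m * (2 * ε * (|u1 s x| - q * |u2 s x|) ^ 2) := by positivity
      nlinarith)
  simp only [intervalIntegral.integral_const_mul] at key
  set I := ∫ s in (0:ℝ)..t, ∫ x, |u s x| * |u1 s x| * |u2 s x|
  have hEt : 0 ≤ ∫ x, (u t x ^ 2 + β * u1 t x ^ 2) := integral_nonneg fun x => by positivity
  have hkey : 4 * ε * q * I ≤ m * C₀ := by
    have := mul_le_mul_of_nonneg_left h0 hm0
    have := mul_nonneg hm0 hEt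
    linarith
  have hqm : q * m ≤ √(k * C₀) * ε := by
    refine le_of_sq_le_sq ?_ (by positivity)
    rw [mul_pow, mul_pow, hm2, Real.sq_sqrt (by positivity)]
    have : q ^ 2 * (C₀ / q) = q * C₀ := by field_simp
    rw [this]
    nlinarith
  have : 4 * ε * (β * I) ≤ 4 * ε * (√(k * C₀) * C₀ / 4) := by
    rw [← hqβ]
    have h1 := mul_le_mul_of_nonneg_left hkey hq.le
    have h2 := mul_le_mul_of_nonneg_right hqm hC.le
    linarith
  exact le_of_mul_le_mul_left this (by positivity)

lemma pointwise {A ε β Q κ N u u1 u2 : ℝ} (hA : A ≠ 0) (hε : 0 < ε) (hε1 : ε ≤ 1) (hβ : 0 < β)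
    (hκ : 0 < κ) (hQ : 0 < Q) (hβκ : β ≤ κ * ε ^ 4)
    (hN : N = 12 * |A| * κ * (1 + Q) + 10 * A ^ 2 * κ * Q) (hεN : ε * N ≤ 5)
    (hu : ε * u ^ 2 ≤ Q) :
    12 * A ^ 2 * β * u ^ 2 * u1 * u2 - 28 / 3 * A ^ 3 * β * u ^ 3 * u1 * u2
        - 12 * A ^ 2 * ε * u ^ 2 * u1 ^ 2 + 2 * A * ε ^ 2 * u * u1 * u2 - 2 * ε ^ 3 * u2 ^ 2
      ≤ -(|A| * ε ^ 2 * (|u| * |u1| * |u2|)) := by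
  have ha : 0 < |A| := abs_pos.mpr hA
  obtain ⟨a, haA⟩ : ∃ a, a = |A| := ⟨_, rfl⟩
  rw [← haA] at ha hN ⊢
  have hA2 : A ^ 2 = a ^ 2 := by rw [haA, sq_abs]
  obtain ⟨y, hy⟩ : ∃ y, y = |u| := ⟨_, rfl⟩
  have hy0 : 0 ≤ y := hy ▸ abs_nonneg _
  have hy2 : u ^ 2 = y ^ 2 := by rw [hy, sq_abs]
  obtain ⟨p, hp⟩ : ∃ p, p = |u| * |u1| := ⟨_, rfl⟩
  have hp0 : 0 ≤ p := by rw [hp]; positivity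
  obtain ⟨z, hz⟩ : ∃ z, z = |u2| := ⟨_, rfl⟩
  have hz0 : 0 ≤ z := hz ▸ abs_nonneg _
  have hpz : 0 ≤ p * z := mul_nonneg hp0 hz0
  rw [← hp, ← hz]
  have t1 : 12 * A ^ 2 * β * u ^ 2 * u1 * u2 ≤ 12 * a ^ 2 * β * y * (p * z) := by
    refine (le_abs_self _).trans (le_of_eq ?_)
    simp only [abs_mul, abs_pow, abs_of_pos hβ, ← haA, ← hy, hp, hz, abs_of_pos (by norm_num : (0:ℝ) < 12)]
    ring
  have t2 : -(28 / 3 * A ^ 3 * β * u ^ 3 * u1 * u2) ≤ 28 / 3 * a ^ 3 * β * y ^ 2 * (p * z) := by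
    refine (neg_le_abs _).trans (le_of_eq ?_)
    simp only [abs_mul, abs_pow, abs_of_pos hβ, ← haA, ← hy, hp, hz, abs_of_pos (by norm_num : (0:ℝ) < 28 / 3)]
    ring
  have t3 : 2 * A * ε ^ 2 * u * u1 * u2 ≤ 2 * a * ε ^ 2 * (p * z) := by
    refine (le_abs_self _).trans (le_of_eq ?_)
    simp only [abs_mul, abs_pow, abs_of_pos hε, ← haA, ← hy, hp, hz, abs_of_pos (by norm_num : (0:ℝ) < 2)]
    ring
  have t4 : 12 * A ^ 2 * ε * u ^ 2 * u1 ^ 2 = 12 * a ^ 2 * ε * p ^ 2 := by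
    rw [hA2, hp, mul_pow, sq_abs, sq_abs]; ring
  have t5 : u2 ^ 2 = z ^ 2 := by rw [hz, sq_abs]
  have t6 : 8 * a * ε ^ 2 * (p * z) ≤ 12 * a ^ 2 * ε * p ^ 2 + 2 * ε ^ 3 * z ^ 2 := by
    have h1 : 0 ≤ ε * (2 * (2 * a * p - ε * z) ^ 2) := by positivity
    have h2 : 0 ≤ a ^ 2 * ε * p ^ 2 := by positivity
    nlinarith
  rw [hy2] at hu
  have b1 : β * y ^ 2 ≤ κ * ε ^ 3 * Q := by
    calc β * y ^ 2 ≤ κ * ε ^ 4 * y ^ 2 := by gcongr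
      _ = κ * ε ^ 3 * (ε * y ^ 2) := by ring
      _ ≤ _ := by gcongr
  have b2 : β * y ≤ κ * ε ^ 3 * (1 + Q) := by
    have h1 : y ≤ 1 + y ^ 2 := by nlinarith [sq_nonneg (y - 1)]
    have h2 : β ≤ κ * ε ^ 3 := by
      refine hβκ.trans ?_
      have : κ * ε ^ 4 = κ * ε ^ 3 * ε := by ring
      rw [this]
      exact mul_le_of_le_one_right (by positivity) hε1
    nlinarith [mul_le_mul_of_nonneg_left h1 hβ.le]
  have b3 : 12 * a ^ 2 * β * y + 28 / 3 * a ^ 3 * β * y ^ 2 ≤ 5 * a * ε ^ 2 := by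
    have h1 : 12 * a ^ 2 * (β * y) ≤ 12 * a ^ 2 * (κ * ε ^ 3 * (1 + Q)) := by gcongr
    have h2 : 28 / 3 * a ^ 3 * (β * y ^ 2) ≤ 10 * a ^ 3 * (κ * ε ^ 3 * Q) := by
      gcongr; norm_num
    have h3 : a * ε ^ 2 * (ε * N) ≤ a * ε ^ 2 * 5 := by gcongr
    rw [hN, hA2] at h3
    linarith
  have b4 := mul_le_mul_of_nonneg_right b3 hpz
  rw [t5]
  linarith

lemma small (S : Sol A ε β R u u1 u2 u3 w w1) (hA : A ≠ 0) (hε : 0 < ε) (hε1 : ε ≤ 1) (hβ : 0 < β)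
    {C₀ κ L Q N : ℝ} (hC : 0 < C₀) (hκ : 0 < κ) (hL : 0 < L) (hQ : Q = C₀ + 2 * L)
    (h0 : ∫ x, (u 0 x ^ 2 + β * u1 0 x ^ 2) ≤ C₀)
    (h1 : ∫ x, (A ^ 2 * u 0 x ^ 4 + ε ^ 2 * u1 0 x ^ 2) ≤ L)
    (hβκ : β ≤ κ * ε ^ 4)
    (hN : N = 12 * |A| * κ * (1 + Q) + 10 * A ^ 2 * κ * Q) (hεN : ε * N ≤ 5)
    {t : ℝ} (ht : 0 ≤ t) :
    β * ∫ s in (0:ℝ)..t, ∫ x, |u s x| * |u1 s x| * |u2 s x| ≤ κ * L / |A| * ε := by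
  have hP := csP S
  have k0 := S.c0.cont
  have k1 := S.c1.cont
  have k2 := S.c2.cont
  have ha : 0 < |A| := abs_pos.mpr hA
  have i0 := cs_sq S.c0 2 (by norm_num)
  have i04 := cs_sq S.c0 4 (by norm_num)
  have i1 := cs_sq S.c1 2 (by norm_num)
  have step : ∀ s, 0 ≤ s → ∫ x, (A ^ 2 * u s x ^ 4 + ε ^ 2 * u1 s x ^ 2) ≤ 2 * L →
      ∫ x, (A ^ 2 * (4 * u s x ^ 3 * w s x) + ε ^ 2 * (2 * u1 s x * w1 s x))
        ≤ -(|A| * ε ^ 2 * ∫ x, |u s x| * |u1 s x| * |u2 s x|) := by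
    intro s hs hle
    have hub : ∀ x, ε * u s x ^ 2 ≤ Q := by
      intro x
      refine (sup_bound_s13 hε S.c0 S.c1 s x (S.d0 s)).trans ?_
      have hE := E_le S hε hβ h0 hs
      rw [integral_add (i0.integrable s) ((i1.integrable s).const_mul _)] at hE ⊢
      rw [integral_add ((i04.integrable s).const_mul _) ((i1.integrable s).const_mul _)] at hle
      have n1 : 0 ≤ ∫ x, β * u1 s x ^ 2 := integral_nonneg fun x => by positivity
      have n2 : 0 ≤ ∫ x, A ^ 2 * u s x ^ 4 := integral_nonneg fun x => by positivity
      linarith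
    rw [energyPhi S s hs, ← integral_const_mul, ← integral_neg]
    have hI2 : CS R (fun t x => 12 * A ^ 2 * β * u t x ^ 2 * u1 t x * u2 t x
        - 28 / 3 * A ^ 3 * β * u t x ^ 3 * u1 t x * u2 t x
        - 12 * A ^ 2 * ε * u t x ^ 2 * u1 t x ^ 2
        + 2 * A * ε ^ 2 * u t x * u1 t x * u2 t x - 2 * ε ^ 3 * u2 t x ^ 2) :=
      ⟨by fun_prop, fun t x hx => by simp [S.c2.zero t x hx, S.c1.zero t x hx]⟩
    refine integral_mono (hI2.integrable s) ((hP.integrable s).const_mul _).neg fun x => ?_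
    exact pointwise hA hε hε1 hβ hκ (by rw [hQ]; positivity) hβκ hN hεN (hub x)
  have hPn : ∀ s, 0 ≤ ∫ x, |u s x| * |u1 s x| * |u2 s x| := fun s =>
    integral_nonneg fun x => by positivity
  have hbar : ∀ s, 0 ≤ s → ∫ x, (A ^ 2 * u s x ^ 4 + ε ^ 2 * u1 s x ^ 2) ≤ 2 * L := fun s hs =>
    barrier (hasDerivPhi S) hL h1 (fun r hr hle => (step r hr hle).trans
      (neg_nonpos.mpr (mul_nonneg (by positivity) (hPn r)))) hs
  have key := int_le (g := fun s => |A| * ε ^ 2 * ∫ x, |u s x| * |u1 s x| * |u2 s x|)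
    (hasDerivPhi S) (contPhi S) (continuous_const.mul hP.cont_int) ht
    (fun s hs _ => step s hs (hbar s hs))
  simp only [intervalIntegral.integral_const_mul] at key
  have hn : 0 ≤ ∫ x, (A ^ 2 * u t x ^ 4 + ε ^ 2 * u1 t x ^ 2) :=
    integral_nonneg fun x => by positivity
  have hI0 : 0 ≤ ∫ s in (0:ℝ)..t, ∫ x, |u s x| * |u1 s x| * |u2 s x| :=
    intervalIntegral.integral_nonneg ht fun s _ => hPn s
  set I := ∫ s in (0:ℝ)..t, ∫ x, |u s x| * |u1 s x| * |u2 s x|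
  have hk : |A| * ε ^ 2 * I ≤ L := by linarith
  rw [div_mul_eq_mul_div, le_div_iff₀ ha]
  calc β * I * |A| ≤ κ * ε ^ 4 * I * |A| := by gcongr
    _ = κ * ε ^ 2 * (|A| * ε ^ 2 * I) := by ring
    _ ≤ κ * ε ^ 2 * L := by gcongr
    _ = κ * L * ε * ε := by ring
    _ ≤ κ * L * ε * 1 := by gcongr
    _ = _ := by ring

lemma core (A C₀ : ℝ) (hA : A ≠ 0) (hC : 0 < C₀) : ∃ M : ℝ, 0 < M ∧
    ∀ (ε β R : ℝ) (u u1 u2 u3 w w1 : ℝ → ℝ → ℝ), Sol A ε β R u u1 u2 u3 w w1 →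
      0 < ε → 0 < β →
      ((∫ x : ℝ, (u 0 x) ^ 2) + (∫ x : ℝ, (u 0 x) ^ 4)
            + (β + ε ^ 2) * (∫ x : ℝ, (u1 0 x) ^ 2) ≤ C₀) →
      β ≤ ε ^ 4 / (Real.sqrt C₀ * A ^ 2) → ∀ t : ℝ, 0 ≤ t →
      β * (∫ s in (0:ℝ)..t, ∫ x : ℝ, |u s x| * |u1 s x| * |u2 s x|) ≤ M * ε := by
  have ha : 0 < |A| := abs_pos.mpr hA
  have hA2 : 0 < A ^ 2 := by positivity
  have hsC : 0 < √C₀ := Real.sqrt_pos.mpr hC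
  obtain ⟨κ, hκd⟩ : ∃ κ, κ = 1 / (√C₀ * A ^ 2) := ⟨_, rfl⟩
  have hκ : 0 < κ := by rw [hκd]; positivity
  obtain ⟨k, hk, hkκ⟩ : ∃ k : ℝ, 0 < k ∧ k ^ 2 = κ :=
    ⟨√κ, Real.sqrt_pos.mpr hκ, Real.sq_sqrt hκ.le⟩
  obtain ⟨L, hL⟩ : ∃ L, L = (A ^ 2 + 1) * C₀ := ⟨_, rfl⟩
  have hL0 : 0 < L := by rw [hL]; positivity
  obtain ⟨Q, hQ⟩ : ∃ Q, Q = C₀ + 2 * L := ⟨_, rfl⟩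
  have hQ0 : 0 < Q := by rw [hQ]; positivity
  obtain ⟨N, hN⟩ : ∃ N, N = 12 * |A| * κ * (1 + Q) + 10 * A ^ 2 * κ * Q := ⟨_, rfl⟩
  have hN0 : 0 < N := by rw [hN]; positivity
  obtain ⟨K, hK⟩ : ∃ K, K = √(k * C₀) * C₀ / 4 := ⟨_, rfl⟩
  have hK0 : 0 ≤ K := by rw [hK]; positivity
  have hM0 : 0 < κ * L / |A| := by positivity
  refine ⟨κ * L / |A| + K * (1 + N), by positivity, ?_⟩
  intro ε β R u u1 u2 u3 w w1 S hε hβ hinit hβε t ht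
  have hβκ : β ≤ κ * ε ^ 4 := by
    rw [hκd]; refine hβε.trans (le_of_eq ?_); ring
  have i0 := (cs_sq S.c0 2 (by norm_num)).integrable 0
  have i04 := (cs_sq S.c0 4 (by norm_num)).integrable 0
  have i1 := (cs_sq S.c1 2 (by norm_num)).integrable 0
  have n0 : 0 ≤ ∫ x, u 0 x ^ 2 := integral_nonneg fun x => by positivity
  have n4 : 0 ≤ ∫ x, u 0 x ^ 4 := integral_nonneg fun x => by positivity
  have n1 : 0 ≤ ∫ x, u1 0 x ^ 2 := integral_nonneg fun x => by positivity
  have h0 : ∫ x, (u 0 x ^ 2 + β * u1 0 x ^ 2) ≤ C₀ := by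
    rw [integral_add i0 (i1.const_mul _), integral_const_mul]
    nlinarith [mul_nonneg (sq_nonneg ε) n1]
  have h1 : ∫ x, (A ^ 2 * u 0 x ^ 4 + ε ^ 2 * u1 0 x ^ 2) ≤ L := by
    rw [integral_add (i04.const_mul _) (i1.const_mul _), integral_const_mul, integral_const_mul, hL]
    have e1 : ∫ x, u 0 x ^ 4 ≤ C₀ := by
      nlinarith [mul_nonneg (sq_nonneg ε) n1, mul_nonneg hβ.le n1]
    have e2 : ε ^ 2 * ∫ x, u1 0 x ^ 2 ≤ C₀ := by
      nlinarith [mul_nonneg hβ.le n1]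
    nlinarith [mul_le_mul_of_nonneg_left e1 hA2.le]
  by_cases hc : ε ≤ 1 ∧ ε * N ≤ 5
  · have := small S hA hε hc.1 hβ hC hκ hL0 hQ h0 h1 hβκ hN hc.2 ht
    have h2 : 0 ≤ K * (1 + N) * ε := by positivity
    rw [add_mul]
    linarith
  · have h2 := large S hε hβ hC hk h0 (by rw [hkκ]; exact hβκ) ht
    rw [← hK] at h2
    have h3 : 1 ≤ (1 + N) * ε := by
      rw [not_and_or] at hc
      rcases hc with hc | hc
      · nlinarith [mul_pos hN0 hε]
      · nlinarith
    have h4 : K * 1 ≤ K * ((1 + N) * ε) := by gcongr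
    have h5 : 0 < κ * L / |A| * ε := by positivity
    rw [add_mul]
    linarith

/-- Smooth version of the class. -/
structure SS (R : ℝ) (F : ℝ → ℝ → ℝ) : Prop where
  smooth : ContDiff ℝ (⊤ : ℕ∞) (Function.uncurry F)
  zero : ∀ t x, R < |x| → F t x = 0

lemma SS.toCS {F : ℝ → ℝ → ℝ} (h : SS R F) : CS R F := ⟨h.smooth.continuous, h.zero⟩

lemma SS.hasX {F : ℝ → ℝ → ℝ} (h : SS R F) (t x : ℝ) :
    HasDerivAt (F t) (fderiv ℝ (Function.uncurry F) (t, x) (0, 1)) x := by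
  have h1 : HasFDerivAt (Function.uncurry F) _ (t, x) :=
    (h.smooth.differentiable (by simp) (t, x)).hasFDerivAt
  have h2 : HasDerivAt (fun y : ℝ => (t, y)) ((0 : ℝ), (1 : ℝ)) x :=
    (hasDerivAt_const x t).prodMk (hasDerivAt_id x)
  exact h1.comp_hasDerivAt x h2

lemma SS.hasT {F : ℝ → ℝ → ℝ} (h : SS R F) (t x : ℝ) :
    HasDerivAt (fun τ => F τ x) (fderiv ℝ (Function.uncurry F) (t, x) (1, 0)) t := by
  have h1 : HasFDerivAt (Function.uncurry F) _ (t, x) :=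
    (h.smooth.differentiable (by simp) (t, x)).hasFDerivAt
  have h2 : HasDerivAt (fun y : ℝ => (y, x)) ((1 : ℝ), (0 : ℝ)) t :=
    (hasDerivAt_id t).prodMk (hasDerivAt_const t x)
  exact h1.comp_hasDerivAt t h2

lemma SS.smooth_dir {F : ℝ → ℝ → ℝ} (h : SS R F) (v : ℝ × ℝ) :
    ContDiff ℝ (⊤ : ℕ∞) (fun p => fderiv ℝ (Function.uncurry F) p v) :=
  (h.smooth.fderiv_right (m := (⊤ : ℕ∞)) (by simp)).clm_apply contDiff_const

lemma SS.dx {F : ℝ → ℝ → ℝ} (h : SS R F) : SS R (fun t => deriv (F t)) := by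
  refine ⟨?_, fun t x hx => ?_⟩
  · convert h.smooth_dir (0, 1) using 1
    ext ⟨t, x⟩
    exact (h.hasX t x).deriv
  · have : F t =ᶠ[nhds x] fun _ => 0 := by
      filter_upwards [(isOpen_lt continuous_const continuous_abs).mem_nhds hx] with y hy
      exact h.zero t y hy
    rw [this.deriv_eq]
    simp

lemma SS.dt {F : ℝ → ℝ → ℝ} (h : SS R F) : SS R (fun t x => deriv (fun τ => F τ x) t) := by
  refine ⟨?_, fun t x hx => ?_⟩
  · convert h.smooth_dir (1, 0) using 1
    ext ⟨t, x⟩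
    exact (h.hasT t x).deriv
  · have : (fun τ => F τ x) = fun _ => 0 := by
      ext τ
      exact h.zero τ x hx
    show deriv (fun τ => F τ x) t = 0
    rw [this]
    simp

lemma SS.hx {F : ℝ → ℝ → ℝ} (h : SS R F) (t x : ℝ) : HasDerivAt (F t) (deriv (F t) x) x :=
  (h.hasX t x).differentiableAt.hasDerivAt

lemma SS.ht {F : ℝ → ℝ → ℝ} (h : SS R F) (t x : ℝ) :
    HasDerivAt (fun τ => F τ x) (deriv (fun τ => F τ x) t) t :=
  (h.hasT t x).differentiableAt.hasDerivAt

lemma SS.symm {F : ℝ → ℝ → ℝ} (h : SS R F) (t x : ℝ) :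
    deriv (fun τ => deriv (F τ) x) t = deriv (fun y => deriv (fun τ => F τ y) t) x := by
  have e1 : Function.uncurry (fun t => deriv (F t))
      = fun p => fderiv ℝ (Function.uncurry F) p (0, 1) := by
    ext ⟨t, x⟩
    exact (h.hasX t x).deriv
  have e2 : Function.uncurry (fun t x => deriv (fun τ => F τ x) t)
      = fun p => fderiv ℝ (Function.uncurry F) p (1, 0) := by
    ext ⟨t, x⟩
    exact (h.hasT t x).deriv
  have hd : DifferentiableAt ℝ (fderiv ℝ (Function.uncurry F)) (t, x) :=
    (h.smooth.fderiv_right (m := (⊤ : ℕ∞)) (by simp)).differentiable (by simp) _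
  have a1 := (h.dx.hasT t x).deriv
  have a2 := (h.dt.hasX t x).deriv
  rw [e1, fderiv_clm_apply hd (differentiableAt_const _)] at a1
  rw [e2, fderiv_clm_apply hd (differentiableAt_const _)] at a2
  have hs : IsSymmSndFDerivAt ℝ (Function.uncurry F) (t, x) :=
    h.smooth.contDiffAt.isSymmSndFDerivAt (by simp only [minSmoothness_of_isRCLikeNormedField]; exact WithTop.coe_le_coe.2 le_top)
  refine a1.trans (Eq.trans ?_ a2.symm)
  simpa using hs (1, 0) (0, 1)

end KS





/-- Estimate `β ∫₀ᵗ ‖u ∂ₓu ∂ₓ²u‖_{L¹} ds ≤ M ε`. -/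
theorem stmt_13 (A C₀ : ℝ) (hA : A ≠ 0) (hC₀pos : 0 < C₀) :
    ∃ M : ℝ, 0 < M ∧
      ∀ (ε β : ℝ) (u : ℝ → ℝ → ℝ),
        0 < ε → 0 < β →
        ContDiff ℝ (⊤ : ℕ∞) (Function.uncurry u) →
        (∃ R > (0:ℝ), ∀ t x : ℝ, R ≤ |x| → u t x = 0) →
        (∀ t : ℝ, 0 ≤ t → ∀ x : ℝ,
          deriv (fun τ => u τ x) t
            + A * u t x * deriv (u t) x
            + β * deriv (deriv (deriv (u t))) x
            - (2 * A / 3) * β * deriv (fun y => u t y * deriv (deriv (u t)) y) x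
            - (-(A / 3)) * β * deriv (u t) x * deriv (deriv (u t)) x
            - ε * deriv (deriv (u t)) x = 0) →
        ((∫ x : ℝ, (u 0 x) ^ 2) + (∫ x : ℝ, (u 0 x) ^ 4)
            + (β + ε ^ 2) * (∫ x : ℝ, (deriv (u 0) x) ^ 2) ≤ C₀) →
        β ≤ ε ^ 4 / (Real.sqrt C₀ * A ^ 2) →
        ∀ t : ℝ, 0 ≤ t →
          β * (∫ s in (0:ℝ)..t, ∫ x : ℝ, |u s x| * |deriv (u s) x| * |deriv (deriv (u s)) x|) ≤ M * ε := by
  obtain ⟨M, hM, h⟩ := KS.core A C₀ hA hC₀pos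
  refine ⟨M, hM, ?_⟩
  intro ε β u hε hβ hu ⟨R, hR, hz⟩ hpde hinit hβε t ht
  have S0 : KS.SS R u := ⟨hu, fun t x hx => hz t x hx.le⟩
  refine h ε β R u (fun t => deriv (u t)) (fun t => deriv (deriv (u t)))
    (fun t => deriv (deriv (deriv (u t)))) (fun t x => deriv (fun τ => u τ x) t)
    (fun t x => deriv (fun y => deriv (fun τ => u τ y) t) x) ?_ hε hβ hinit hβε t ht
  have S1 := S0.dx
  have S2 := S1.dx
  have S3 := S2.dx
  have Sw := S0.dt
  have Sw1 := Sw.dx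
  refine ⟨S0.toCS, S1.toCS, S2.toCS, S3.toCS, Sw.toCS, Sw1.toCS, S0.hx, S1.hx, S2.hx, Sw.hx,
    S0.ht, fun t x => ?_, fun t ht x => ?_⟩
  · have := S1.ht t x
    rw [S0.symm t x] at this
    exact this
  · have h1 := hpde t ht x
    have h2 : deriv (fun y => u t y * deriv (deriv (u t)) y) x
        = deriv (u t) x * deriv (deriv (u t)) x + u t x * deriv (deriv (deriv (u t))) x :=
      ((S0.hx t x).mul (S2.hx t x)).deriv
    rw [h2] at h1
    linear_combination h1
end
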